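/- Let p ∈ F[X] be nonzero and q ∈ F{Y} with D(p) = q·p, let α = lp(p) and ℓ = lc(p). Then q = C(d(ℓ)/ℓ) + Σ_{i=1}^n (Σ_{j=1}^n α_{ij})·Y_{ii} (the row sums Σ_j α_{ij} ∈ ℕ acting as natural-number scalars). -/

import Mathlib

open MvPolynomial

/-- The polynomial ring `R = F{Y_ij}[X_ij]`: multivariate polynomials over `F` in the
variables `Y i j k` (indexed by `Sum.inl (i,j,k)`) and `X i j` (indexed by `Sum.inr (i,j)`). -/
abbrev Rgen (F : Type*) [Field F] (n : ℕ) : Type _ :=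
  MvPolynomial ((Fin n × Fin n × ℕ) ⊕ (Fin n × Fin n)) F

/-- `det[X]`: the determinant of the `n × n` matrix whose `(i,j)` entry is the variable `X i j`. -/
noncomputable def detX (F : Type*) [Field F] (n : ℕ) : Rgen F n :=
  (Matrix.of fun i j : Fin n => X (Sum.inr (i, j))).det

/-- The `F`-subalgebra `F{Y}` of `R` generated by all the variables `Y i j k`. -/
noncomputable def FY (F : Type*) [Field F] (n : ℕ) : Subalgebra F (Rgen F n) :=
  Algebra.adjoin F (Set.range fun v : Fin n × Fin n × ℕ => X (Sum.inl v))

/-- The `F`-subalgebra `F[X]` of `R` generated by all the variables `X i j`. -/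
noncomputable def FX (F : Type*) [Field F] (n : ℕ) : Subalgebra F (Rgen F n) :=
  Algebra.adjoin F (Set.range fun v : Fin n × Fin n => X (Sum.inr v))

/-- Strict degree reverse lexicographic comparison `α < β` of exponent vectors in the
`X`-variables, for the variable ordering `X 1 1 > X 1 2 > ⋯ > X 1 n > X 2 1 > ⋯ > X n n`:
either the total degree of `α` is smaller, or the total degrees agree and at the last
(rightmost, i.e. smallest) variable where they differ, `α` has the larger exponent. -/
def degRevLexLT {n : ℕ} (α β : (Fin n × Fin n) →₀ ℕ) : Prop :=
  (∑ v : Fin n × Fin n, α v) < (∑ v : Fin n × Fin n, β v) ∨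
  ((∑ v : Fin n × Fin n, α v) = (∑ v : Fin n × Fin n, β v) ∧
    ∃ v : Fin n × Fin n, β v < α v ∧
      ∀ w : Fin n × Fin n, (v.1 < w.1 ∨ (v.1 = w.1 ∧ v.2 < w.2)) → α w = β w)

/-!
Write `δ` for `d` applied coefficientwise on `F[X]` and `Eᵢₗ = ∑ⱼ Xₗⱼ ∂/∂Xᵢⱼ`. On `F[X]` the
derivation is `D = δ + ∑ᵢₗ Yᵢₗ Eᵢₗ`. Specializing the variables outside `F[X]` to constants in
`D p = q p` gives a polynomial multiple of `p` of degree at most `deg p`, hence a scalar multiple,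
so that `p` is an eigenvector of `δ` and of every `Eᵢₗ`, and the eigenvalues are the coefficients
of `q`. For `i ≠ l` the operator `Eᵢₗ` lowers the degree in row `i`, so its eigenvalue is `0`; the
operator `Eᵢᵢ` multiplies each monomial `X^α` by its degree in row `i`, so its eigenvalue is the
`i`-th row sum of every exponent `α` occurring in `p`.
-/

/-- The bundled form of an additive self-map satisfying the Leibniz rule. -/
def derivationOfLeibniz {A : Type*} [CommRing A] (f : A → A)
    (h_add : ∀ a b, f (a + b) = f a + f b) (h_mul : ∀ a b, f (a * b) = f a * b + a * f b) :
    Derivation ℤ A A :=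
  Derivation.mk' (AddMonoidHom.mk' f h_add).toIntLinearMap fun a b ↦ by
    simpa [mul_comm, add_comm] using h_mul a b

section MapCoeffs

variable {R σ : Type*} [CommRing R]

/-- The extension of a derivation `d` of `R` to `R[X]` that kills the variables; it applies `d`
to every coefficient. -/
noncomputable def mapCoeffs (d : Derivation ℤ R R) :
    Derivation ℤ (MvPolynomial σ R) (MvPolynomial σ R) :=
  Derivation.mk'
    (AddMonoidHom.mk' (AddMonoidAlgebra.map d.toLinearMap.toAddMonoidHom)
      fun p q ↦ AddMonoidAlgebra.map_add ..).toIntLinearMap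
    fun p q ↦ by
      classical
      ext β
      change d (coeff β (p * q)) = _
      rw [smul_eq_mul, smul_eq_mul, mul_comm q, coeff_add]
      simp only [coeff_mul, map_sum, Derivation.leibniz, Finset.sum_add_distrib, smul_eq_mul]
      congr 1
      exact Finset.sum_congr rfl fun _ _ ↦ mul_comm _ _

@[simp]
theorem coeff_mapCoeffs (d : Derivation ℤ R R) (p : MvPolynomial σ R) (β : σ →₀ ℕ) :
    coeff β (mapCoeffs d p) = d (coeff β p) :=
  rfl

theorem mapCoeffs_C (d : Derivation ℤ R R) (a : R) :
    mapCoeffs d (C a : MvPolynomial σ R) = C (d a) := by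
  classical
  ext β
  simp [coeff_C, apply_ite d]

theorem mapCoeffs_X (d : Derivation ℤ R R) (v : σ) :
    mapCoeffs d (X v : MvPolynomial σ R) = 0 := by
  classical
  ext β
  simp [coeff_X, apply_ite d]

theorem totalDegree_mapCoeffs_le (d : Derivation ℤ R R) (p : MvPolynomial σ R) :
    (mapCoeffs d p).totalDegree ≤ p.totalDegree := by
  refine totalDegree_le_of_support_subset fun β hβ ↦ ?_
  rw [mem_support_iff, coeff_mapCoeffs] at hβ
  exact mem_support_iff.mpr fun h ↦ hβ (by rw [h, map_zero])

end MapCoeffs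

theorem eq_C_of_totalDegree_mul_le {R σ : Type*} [CommSemiring R] [IsCancelMulZero R]
    {p r : MvPolynomial σ R} (hp : p ≠ 0) (h : (r * p).totalDegree ≤ p.totalDegree) :
    r = C (coeff 0 r) := by
  rcases eq_or_ne r 0 with rfl | hr
  · simp
  · rw [totalDegree_mul_of_isDomain hr hp] at h
    exact totalDegree_eq_zero_iff_eq_C.mp (by lia)

theorem coeff_X_mul_pderiv_self {R σ : Type*} [CommSemiring R] (v : σ)
    (p : MvPolynomial σ R) (β : σ →₀ ℕ) : coeff β (X v * pderiv v p) = β v • coeff β p := by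
  classical
  induction p using MvPolynomial.induction_on' with
  | monomial γ a =>
    rw [X_mul_pderiv_monomial, coeff_smul, coeff_monomial]
    split_ifs with h <;> simp [h]
  | add p q hp hq => rw [map_add, mul_add, coeff_add, coeff_add, hp, hq, smul_add]

section RowPolarization

variable {R ι κ : Type*} [CommSemiring R] [Fintype κ]

/-- The polarization operator of the matrix of variables `X`: the derivation that replaces row `i`
by row `l` and kills the variables outside row `i`. -/
noncomputable def rowPolarization (i l : ι) :
    Derivation R (MvPolynomial (ι × κ) R) (MvPolynomial (ι × κ) R) :=
  ∑ j, (X (l, j) : MvPolynomial (ι × κ) R) • pderiv (i, j)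

theorem rowPolarization_apply (i l : ι) (p : MvPolynomial (ι × κ) R) :
    rowPolarization i l p = ∑ j, X (l, j) * pderiv (i, j) p := by
  change Derivation.coeFnAddMonoidHom (∑ j, (X (l, j) : MvPolynomial (ι × κ) R) • pderiv (i, j)) p
    = _
  simp [map_sum]

theorem rowPolarization_X [DecidableEq ι] (i l : ι) (v : ι × κ) :
    rowPolarization i l (X v : MvPolynomial (ι × κ) R) = if v.1 = i then X (l, v.2) else 0 := by
  classical
  obtain ⟨a, b⟩ := v
  by_cases h : a = i <;> simp [rowPolarization_apply, Pi.single_apply, h]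

theorem sum_mul_map_rowPolarization_mul_X [Fintype ι] {B : Type*} [CommSemiring B]
    [Algebra R B] (f : MvPolynomial (ι × κ) R →ₐ[R] B) (w : ι → ι → B)
    (p : MvPolynomial (ι × κ) R) (a : ι) (b : κ) :
    ∑ i, ∑ l, w i l * f (rowPolarization i l (p * X (a, b))) =
      f p * ∑ l, w a l * f (X (l, b)) +
        f (X (a, b)) * ∑ i, ∑ l, w i l * f (rowPolarization i l p) := by
  classical
  have hterm (i l : ι) : w i l * f (rowPolarization i l (p * X (a, b))) =
      (if a = i then f p * (w i l * f (X (l, b))) else 0) +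
        f (X (a, b)) * (w i l * f (rowPolarization i l p)) := by
    rw [Derivation.leibniz, rowPolarization_X]
    split_ifs <;> simp only [smul_eq_mul, map_add, map_mul, map_zero] <;> ring
  simp only [hterm, Finset.sum_add_distrib, Finset.mul_sum]
  rw [Finset.sum_comm (f := fun i l ↦ ite _ _ _)]
  simp only [Finset.sum_ite_eq, Finset.mem_univ, if_true]

theorem coeff_rowPolarization_self (i : ι) (p : MvPolynomial (ι × κ) R) (β : ι × κ →₀ ℕ) :
    coeff β (rowPolarization i i p) = (∑ j, β (i, j)) • coeff β p := by
  simp only [rowPolarization_apply, coeff_sum, coeff_X_mul_pderiv_self, Finset.sum_smul]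

theorem exists_mem_support_of_mem_support_rowPolarization {i l : ι} {p : MvPolynomial (ι × κ) R}
    {β : ι × κ →₀ ℕ} (hβ : β ∈ (rowPolarization i l p).support) :
    ∃ γ ∈ p.support, ∃ j, γ + Finsupp.single (l, j) 1 = β + Finsupp.single (i, j) 1 := by
  classical
  rw [mem_support_iff, rowPolarization_apply, coeff_sum] at hβ
  obtain ⟨j, -, hj⟩ := Finset.exists_ne_zero_of_sum_ne_zero hβ
  rw [coeff_X_mul', coeff_pderiv, ite_ne_right_iff] at hj
  obtain ⟨hβj, hj⟩ := hj
  refine ⟨_, mem_support_iff.mpr (left_ne_zero_of_mul hj), j, ?_⟩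
  rw [add_right_comm, tsub_add_cancel_of_le]
  exact Finsupp.single_le_iff.mpr (Nat.one_le_iff_ne_zero.mpr (Finsupp.mem_support_iff.mp hβj))

theorem totalDegree_rowPolarization_le (i l : ι) (p : MvPolynomial (ι × κ) R) :
    (rowPolarization i l p).totalDegree ≤ p.totalDegree := by
  refine Finset.sup_le fun β hβ ↦ ?_
  obtain ⟨γ, hγ, j, h⟩ := exists_mem_support_of_mem_support_rowPolarization hβ
  have hdeg : β.degree = γ.degree := by simpa using (congrArg Finsupp.degree h).symm
  exact hdeg.trans_le (le_totalDegree hγ)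

theorem rowPolarization_eigenvalue_eq_zero [NoZeroDivisors R] {i l : ι} (hil : i ≠ l)
    {p : MvPolynomial (ι × κ) R} (hp : p ≠ 0) {c : R} (h : rowPolarization i l p = c • p) :
    c = 0 := by
  obtain ⟨β, hβ, hmax⟩ := p.support.exists_max_image (fun β ↦ ∑ j, β (i, j))
    (support_nonempty.mpr hp)
  by_contra hc
  have hβ' : β ∈ (rowPolarization i l p).support := by
    rw [mem_support_iff, h, coeff_smul, smul_eq_mul]
    exact mul_ne_zero hc (mem_support_iff.mp hβ)
  obtain ⟨γ, hγ, j, hγβ⟩ := exists_mem_support_of_mem_support_rowPolarization hβ'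
  have hrow : ∑ k, γ (i, k) = ∑ k, β (i, k) + 1 := by
    classical
    have hentry (k : κ) : γ (i, k) = β (i, k) + if j = k then 1 else 0 := by
      simpa [Finsupp.single_apply, hil.symm] using DFunLike.congr_fun hγβ (i, k)
    simp [hentry, Finset.sum_add_distrib]
  have := hmax γ hγ
  lia

end RowPolarization

section SpecializeLeft

variable {R σ τ : Type*} [CommSemiring R]

/-- The specialization of the variables indexed by `τ` to the constants `c`. -/
noncomputable def specializeLeft (c : τ → R) : MvPolynomial (τ ⊕ σ) R →ₐ[R] MvPolynomial σ R :=
  aeval (Sum.elim (fun t ↦ C (c t)) X)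

theorem specializeLeft_X_inl (c : τ → R) (t : τ) :
    specializeLeft c (X (Sum.inl t) : MvPolynomial (τ ⊕ σ) R) = C (c t) := by
  rw [specializeLeft, aeval_X, Sum.elim_inl]

theorem specializeLeft_rename_inr (c : τ → R) (p : MvPolynomial σ R) :
    specializeLeft c (rename Sum.inr p) = p := by
  rw [specializeLeft, aeval_rename, Sum.elim_comp_inr, aeval_X_left_apply]

end SpecializeLeft

section Darboux

variable {A ι κ τ : Type*} [CommRing A] [Fintype ι] [Fintype κ] {Y : ι → ι → τ}
  {d : Derivation ℤ A A}
  {D : Derivation ℤ (MvPolynomial (τ ⊕ ι × κ) A) (MvPolynomial (τ ⊕ ι × κ) A)}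
  {p : MvPolynomial (ι × κ) A} {q : MvPolynomial (τ ⊕ ι × κ) A}

theorem derivation_rename_inr (hC : ∀ a, D (C a) = C (d a))
    (hX : ∀ i j, D (X (Sum.inr (i, j))) = ∑ l, X (Sum.inl (Y i l)) * X (Sum.inr (l, j)))
    (p : MvPolynomial (ι × κ) A) :
    D (rename Sum.inr p) = rename Sum.inr (mapCoeffs d p) +
      ∑ i, ∑ l, X (Sum.inl (Y i l)) * rename Sum.inr (rowPolarization i l p) := by
  induction p using MvPolynomial.induction_on with
  | C a => simp [hC, mapCoeffs_C]
  | add p q hp hq =>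
    simp only [map_add, hp, hq, mul_add, Finset.sum_add_distrib]
    abel
  | mul_X p v hp =>
    obtain ⟨a, b⟩ := v
    rw [sum_mul_map_rowPolarization_mul_X, map_mul, rename_X, Derivation.leibniz,
      Derivation.leibniz, mapCoeffs_X, hX, hp]
    simp only [smul_eq_mul, mul_zero, zero_add, map_mul, rename_X]
    ring

theorem exists_smul_eq_specialization [IsCancelMulZero A] (hC : ∀ a, D (C a) = C (d a))
    (hX : ∀ i j, D (X (Sum.inr (i, j))) = ∑ l, X (Sum.inl (Y i l)) * X (Sum.inr (l, j)))
    (hp : p ≠ 0) (hq : D (rename Sum.inr p) = q * rename Sum.inr p) (c : τ → A) :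
    ∃ a : A, a • p = mapCoeffs d p + ∑ i, ∑ l, c (Y i l) • rowPolarization i l p := by
  have hmul : specializeLeft c q * p =
      mapCoeffs d p + ∑ i, ∑ l, c (Y i l) • rowPolarization i l p := by
    have h := congrArg (specializeLeft c) (hq.symm.trans (derivation_rename_inr hC hX p))
    simpa only [map_mul, map_add, map_sum, specializeLeft_rename_inr, specializeLeft_X_inl,
      ← smul_eq_C_mul] using h
  have hdeg : (specializeLeft c q * p).totalDegree ≤ p.totalDegree := by
    rw [hmul]
    refine (totalDegree_add _ _).trans (max_le (totalDegree_mapCoeffs_le d p) ?_)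
    exact totalDegree_finsetSum_le fun i _ ↦ totalDegree_finsetSum_le fun l _ ↦
      (totalDegree_smul_le _ _).trans (totalDegree_rowPolarization_le i l p)
  use coeff 0 (specializeLeft c q)
  rw [smul_eq_C_mul, ← eq_C_of_totalDegree_mul_le hp hdeg, hmul]

theorem exists_eigenvalues_of_cofactor [IsCancelMulZero A] (hY : Function.Injective2 Y)
    (hC : ∀ a, D (C a) = C (d a))
    (hX : ∀ i j, D (X (Sum.inr (i, j))) = ∑ l, X (Sum.inl (Y i l)) * X (Sum.inr (l, j)))
    (hp : p ≠ 0) (hq : D (rename Sum.inr p) = q * rename Sum.inr p) :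
    ∃ (a : A) (b : ι → ι → A), mapCoeffs d p = a • p ∧
      ∀ i l, rowPolarization i l p = b i l • p := by
  classical
  choose e he using exists_smul_eq_specialization hC hX hp hq
  have hconst : mapCoeffs d p = e 0 • p := by simp [he]
  refine ⟨e 0, fun i l ↦ e (Pi.single (Y i l) 1) - e 0, hconst, fun i l ↦ ?_⟩
  have hsingle (i' l' : ι) :
      (Pi.single (Y i l) 1 : τ → A) (Y i' l') = if i = i' ∧ l = l' then 1 else 0 := by
    simp only [Pi.single_apply, hY.eq_iff, eq_comm]
  rw [sub_smul, he (Pi.single _ _), ← hconst]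
  simp [hsingle, ite_and]

theorem cofactor_eq_of_eigenvalues [IsCancelMulZero A] (hC : ∀ a, D (C a) = C (d a))
    (hX : ∀ i j, D (X (Sum.inr (i, j))) = ∑ l, X (Sum.inl (Y i l)) * X (Sum.inr (l, j)))
    (hp : p ≠ 0) (hq : D (rename Sum.inr p) = q * rename Sum.inr p) {a : A} {b : ι → ι → A}
    (ha : mapCoeffs d p = a • p) (hb : ∀ i l, rowPolarization i l p = b i l • p) :
    q = C a + ∑ i, ∑ l, C (b i l) * X (Sum.inl (Y i l)) := by
  have hp' : rename (Sum.inr : ι × κ → τ ⊕ ι × κ) p ≠ 0 :=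
    (map_ne_zero_iff _ (rename_injective _ Sum.inr_injective)).mpr hp
  refine mul_right_cancel₀ hp' ?_
  rw [← hq, derivation_rename_inr hC hX, ha]
  simp only [hb, smul_eq_C_mul, map_mul, rename_C, add_mul, Finset.sum_mul, mul_left_comm,
    mul_assoc]

end Darboux

theorem stmt_10_general {F ι κ τ : Type*} [Field F] [Fintype ι] [Fintype κ]
    (d : Derivation ℤ F F)
    (D : Derivation ℤ (MvPolynomial (τ ⊕ ι × κ) F) (MvPolynomial (τ ⊕ ι × κ) F))
    {Y : ι → ι → τ} (hY : Function.Injective2 Y) (hC : ∀ a, D (C a) = C (d a))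
    (hX : ∀ i j, D (X (Sum.inr (i, j))) = ∑ l, X (Sum.inl (Y i l)) * X (Sum.inr (l, j)))
    {p : MvPolynomial (ι × κ) F} {q : MvPolynomial (τ ⊕ ι × κ) F}
    (hq : D (rename Sum.inr p) = q * rename Sum.inr p)
    {α : ι × κ →₀ ℕ} (hα : α ∈ p.support) :
    q = C (d (coeff α p) / coeff α p) + ∑ i, (∑ j, α (i, j)) • X (Sum.inl (Y i i)) := by
  have hp : p ≠ 0 := support_nonempty.mp ⟨α, hα⟩
  have hα₀ : coeff α p ≠ 0 := mem_support_iff.mp hα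
  obtain ⟨a, b, ha, hb⟩ := exists_eigenvalues_of_cofactor hY hC hX hp hq
  have ha' : a = d (coeff α p) / coeff α p := by
    rw [eq_div_iff hα₀, ← coeff_mapCoeffs, ha, coeff_smul, smul_eq_mul]
  have hdiag (i : ι) : b i i = (∑ j, α (i, j) : ℕ) := by
    have h := coeff_rowPolarization_self i p α
    rw [hb, coeff_smul, nsmul_eq_mul, smul_eq_mul] at h
    exact mul_right_cancel₀ hα₀ h
  have hoff (i l : ι) (hl : l ≠ i) : b i l = 0 :=
    rowPolarization_eigenvalue_eq_zero hl.symm hp (hb i l)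
  rw [cofactor_eq_of_eigenvalues hC hX hp hq ha hb, ha']
  congr 1
  refine Finset.sum_congr rfl fun i _ ↦ ?_
  rw [Fintype.sum_eq_single i fun l hl ↦ by rw [hoff i l hl, map_zero, zero_mul], hdiag,
    map_natCast, nsmul_eq_mul]

/-- If `p ∈ F[X]` is a nonzero Darboux polynomial with cofactor
`q ∈ F{Y}`, `α = lp(p)` its leading exponent vector (degrevlex) and `ℓ = lc(p)` its
leading coefficient, then `q = C (d ℓ / ℓ) + ∑ i, (∑ j, α i j) • Y i i`. -/
theorem stmt_10
    {F : Type*} [Field F] [CharZero F] (d : F → F)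
    (hd_add : ∀ a b : F, d (a + b) = d a + d b)
    (hd_mul : ∀ a b : F, d (a * b) = d a * b + a * d b)
    (n : ℕ) (hn : 1 ≤ n)
    (D : Rgen F n → Rgen F n)
    (hD_add : ∀ a b, D (a + b) = D a + D b)
    (hD_mul : ∀ a b, D (a * b) = D a * b + a * D b)
    (hD_C : ∀ f : F, D (C f) = C (d f))
    (hD_Y : ∀ (i j : Fin n) (k : ℕ),
      D (X (Sum.inl (i, j, k))) = X (Sum.inl (i, j, k + 1)))
    (hD_X : ∀ i j : Fin n,
      D (X (Sum.inr (i, j))) = ∑ l : Fin n, X (Sum.inl (i, l, 0)) * X (Sum.inr (l, j)))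
    (p0 : MvPolynomial (Fin n × Fin n) F) (hp0 : p0 ≠ 0)
    (q : Rgen F n) (hq : q ∈ FY F n)
    (hDp : D (rename Sum.inr p0) = q * rename Sum.inr p0)
    (α : (Fin n × Fin n) →₀ ℕ) (hmem : α ∈ p0.support)
    (hlead : ∀ β ∈ p0.support, β ≠ α → degRevLexLT β α)
    :
    q = C (d (coeff α p0) / coeff α p0)
      + ∑ i : Fin n, (∑ j : Fin n, α (i, j)) • X (Sum.inl (i, i, (0 : ℕ))) :=
  stmt_10_general (derivationOfLeibniz d hd_add hd_mul) (derivationOfLeibniz D hD_add hD_mul)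
    (Y := fun i l ↦ (i, l, 0)) (fun _ _ _ _ h ↦ by simpa using h) hD_C hD_X hDp hmem
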